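/- Fix g = (A B; C D) ∈ SL₂(ℤ), j ∈ {1,...,n}, an integer m ≥ 1, and α ∈ ℂ. Suppose b₁,...,b_m : U → ℂ are functions such that, for each p = 1,...,m, b_p( z₁/(Cτ+D),...,z_n/(Cτ+D); (Aτ+B)/(Cτ+D) ) = (Cτ+D)^{2p}·b_p(z₁,...,z_n;τ) for all (z₁,...,z_n,τ) ∈ U. Let Φ ∈ χ satisfy the differential equation ( 𝒟_j(α+2(m−1)) ∘ 𝒟_j(α+2(m−2)) ∘ ⋯ ∘ 𝒟_j(α) ) Φ + Σ_{p=1}^{m} b_p · ( 𝒟_j(α+2(m−p−1)) ∘ ⋯ ∘ 𝒟_j(α) ) Φ = 0 on U (for p = m the composition is empty, so the corresponding term is b_m·Φ; multiplication of a family by a scalar-valued function is componentwise). Then Φ|_{g,α} satisfies the same differential equation; that is, the space of solutions of the equation is invariant under the slash action Φ ↦ Φ|_{g,α}. -/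

import Mathlib

open Complex Real

/-- The Weierstrass function `℘₁(z;τ)`. -/
noncomputable def wp1 (z τ : ℂ) : ℂ :=
  1 / z + ∑' p : {p : ℤ × ℤ // p ≠ (0, 0)},
    (1 / (z - ((p.1.1 : ℂ) * τ + (p.1.2 : ℂ))) + 1 / ((p.1.1 : ℂ) * τ + (p.1.2 : ℂ)) +
      z / ((p.1.1 : ℂ) * τ + (p.1.2 : ℂ)) ^ 2)

/-- The quasimodular Eisenstein series
`G₂(τ) = π²/3 + Σ_{m≠0} Σ_{l∈ℤ} (mτ+l)^{-2}` (iterated sum). -/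
noncomputable def G2 (τ : ℂ) : ℂ :=
  (Real.pi : ℂ) ^ 2 / 3 +
    ∑' m : {m : ℤ // m ≠ 0}, ∑' l : ℤ, 1 / (((m : ℤ) : ℂ) * τ + (l : ℂ)) ^ 2

/-- The domain `U = {(z₁,...,z_n,τ) : Im τ > 0, z_i − z_j ∉ Λ_τ for i ≠ j}`. -/
def Uset (n : ℕ) : Set ((Fin n → ℂ) × ℂ) :=
  {p | 0 < p.2.im ∧ ∀ i j : Fin n, i ≠ j → ∀ k l : ℤ,
    p.1 i - p.1 j ≠ (k : ℂ) * p.2 + (l : ℂ)}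

/-- The componentwise differential operator `𝒟_j(a)` acting on families
`Φ = (φ_μ)_{μ∈ℕⁿ}` of functions of `(z₁,...,z_n; τ)`:
`(𝒟_j(a)Φ)_μ = 2πi·∂φ_μ/∂τ + G₂(τ)·(a·φ_μ + Σ_i φ_{μ+e_i})
+ G₂(τ)·Σ_i z_i·∂φ_μ/∂z_i − Σ_{i≠j} ℘₁(z_i−z_j;τ)·∂φ_μ/∂z_i`. -/
noncomputable def DOp (n : ℕ) (a : ℂ) (j : Fin n)
    (Φ : (Fin n → ℕ) → (Fin n → ℂ) → ℂ → ℂ) :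
    (Fin n → ℕ) → (Fin n → ℂ) → ℂ → ℂ :=
  fun μ z τ =>
    2 * Real.pi * Complex.I * deriv (fun t => Φ μ z t) τ +
      G2 τ * (a * Φ μ z τ + ∑ i : Fin n, Φ (μ + Pi.single i 1) z τ) +
      G2 τ * ∑ i : Fin n, z i * deriv (fun s => Φ μ (Function.update z i s) τ) (z i) -
      ∑ i ∈ Finset.univ.filter (fun i : Fin n => i ≠ j),
        wp1 (z i - z j) τ * deriv (fun s => Φ μ (Function.update z i s) τ) (z i)

/-- The slash action `Φ ↦ Φ|_{g,a}` of `SL₂(ℤ)` on families `Φ = (φ_μ)_{μ∈ℕⁿ}`: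
`(Φ|_{g,a})_μ(z;τ) = (Cτ+D)^{−a}·Σ_ν ((−log(Cτ+D))^{|ν|}/ν!)·φ_{μ+ν}(z/(Cτ+D); (Aτ+B)/(Cτ+D))`,
with principal branches of powers and logarithms. -/
noncomputable def SlashAct (n : ℕ) (g : Matrix.SpecialLinearGroup (Fin 2) ℤ) (a : ℂ)
    (Φ : (Fin n → ℕ) → (Fin n → ℂ) → ℂ → ℂ) :
    (Fin n → ℕ) → (Fin n → ℂ) → ℂ → ℂ :=
  fun μ z τ =>
    ((g 1 0 : ℤ) * τ + (g 1 1 : ℤ)) ^ (-a) *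
      ∑' ν : Fin n → ℕ,
        ((-Complex.log ((g 1 0 : ℤ) * τ + (g 1 1 : ℤ))) ^ (∑ i : Fin n, ν i) /
            ∏ i : Fin n, (Nat.factorial (ν i) : ℂ)) *
          Φ (μ + ν) (fun i => z i / ((g 1 0 : ℤ) * τ + (g 1 1 : ℤ)))
            (((g 0 0 : ℤ) * τ + (g 0 1 : ℤ)) / ((g 1 0 : ℤ) * τ + (g 1 1 : ℤ)))

/-- The iterated operator `DIter α j m = 𝒟_j(α+2(m−1)) ∘ ⋯ ∘ 𝒟_j(α+2) ∘ 𝒟_j(α)`. -/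
noncomputable def DIter (n : ℕ) (α : ℂ) (j : Fin n) :
    ℕ → ((Fin n → ℕ) → (Fin n → ℂ) → ℂ → ℂ) → ((Fin n → ℕ) → (Fin n → ℂ) → ℂ → ℂ)
  | 0, Φ => Φ
  | k + 1, Φ => DOp n (α + 2 * (k : ℂ)) j (DIter n α j k Φ)

/-!
Write `𝒟_j(a) = ξ_j + G₂ · (a + S)`, where `ξ_j` is a holomorphic vector field on `U` and `S` is the
sum of the index shifts `φ_μ ↦ φ_{μ + e_i}`. With `J = Cτ + D`, the map
`A(z, τ) = (z / J, (Aτ + B) / J)` satisfies `dA(ξ_j) = J⁻² ξ_j ∘ A`, because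
`℘₁(z / J; gτ) = J ℘₁(z; τ)` and `G₂(τ) = J⁻² G₂(gτ) + 2πiC / J`. The slash action is the pullback
by `A` followed by `J ^ (-a) exp (-log J · S)`. Since `ξ_j (log J) = 2πiC / J` is exactly the
anomaly of `G₂`, the terms produced by differentiating this factor cancel, and
`𝒟_j(a) (Φ|_{g,a}) = (𝒟_j(a) Φ)|_{g,a+2}`. Iterating, the equation for `Φ|_{g,α}` at a point `p` is
`J ^ (-(α + 2m)) exp (-log J · S)` applied to the equation for `Φ` at `A p`.
-/

section Holomorphic

open Metric Filter Topology

variable {E F : Type*} [NormedAddCommGroup E] [NormedSpace ℂ E]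
  [NormedAddCommGroup F] [NormedSpace ℂ F]

lemma norm_fderiv_le_of_norm_le {f : E → F} {c : E} {R M : ℝ} (hR : 0 < R)
    (hf : DifferentiableOn ℂ f (ball c R)) (hM : ∀ x ∈ ball c R, ‖f x‖ ≤ M) :
    ‖fderiv ℂ f c‖ ≤ 2 * M / R := by
  refine Complex.norm_fderiv_le_div_of_mapsTo_ball hf (fun x hx => ?_) hR
  rw [mem_closedBall, dist_eq_norm, two_mul]
  exact (norm_sub_le _ _).trans (add_le_add (hM x hx) (hM c (mem_ball_self hR)))

lemma norm_sub_sub_fderiv_le {f : E → F} {c y : E} {R M : ℝ}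
    (hf : DifferentiableOn ℂ f (ball c R)) (hM : ∀ x ∈ ball c R, ‖f x‖ ≤ M) (hy : y ∈ ball c R) :
    ‖f y - f c - fderiv ℂ f c (y - c)‖ ≤ 4 * M * (‖y - c‖ / R) ^ 2 := by
  have hR : 0 < R := dist_nonneg.trans_lt hy
  have hc : DifferentiableAt ℂ f c := hf.differentiableAt (ball_mem_nhds c hR)
  set h : E → F := fun x => f x - fderiv ℂ f c (x - c) with hh
  have hmaps : Set.MapsTo h (ball c R) (closedBall (h c) (4 * M)) := by
    intro x hx
    have hlin : ‖fderiv ℂ f c (x - c)‖ ≤ 2 * M := by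
      calc ‖fderiv ℂ f c (x - c)‖ ≤ 2 * M / R * R :=
            (fderiv ℂ f c).le_of_opNorm_le_of_le (norm_fderiv_le_of_norm_le hR hf hM)
              (mem_ball_iff_norm.mp hx).le
        _ = 2 * M := div_mul_cancel₀ _ hR.ne'
    have hval : ‖f x - f c‖ ≤ 2 * M := by
      rw [two_mul]
      exact (norm_sub_le _ _).trans (add_le_add (hM x hx) (hM c (mem_ball_self hR)))
    rw [mem_closedBall, dist_eq_norm, hh]
    simp only [sub_self, map_zero, sub_zero]
    rw [sub_right_comm]
    linarith [norm_sub_le (f x - f c) (fderiv ℂ f c (x - c))]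
  have hlittle : (fun x => h x - h c) =o[𝓝 c] fun x => ‖x - c‖ ^ 1 := by
    simpa [hh, sub_right_comm] using hc.hasFDerivAt.isLittleO.norm_right
  have hdiff : DifferentiableOn ℂ h (ball c R) := by fun_prop
  have := Complex.dist_le_mul_div_pow_of_mapsTo_ball_of_isLittleO hdiff hmaps hlittle hy
  simpa [hh, dist_eq_norm, sub_right_comm] using this

lemma differentiableOn_of_tendstoUniformlyOn [CompleteSpace F] {ι : Type*} {l : Filter ι}
    [NeBot l] {f : ι → E → F} {g : E → F} {U : Set E} (hU : IsOpen U)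
    (hf : ∀ᶠ i in l, DifferentiableOn ℂ (f i) U) (hfg : TendstoUniformlyOn f g l U) :
    DifferentiableOn ℂ g U := by
  intro x₀ hx₀
  obtain ⟨r, hr, hrU⟩ : ∃ r > 0, ∀ x ∈ ball x₀ r, ball x r ⊆ U := by
    obtain ⟨ε, hε, hεU⟩ := Metric.isOpen_iff.mp hU x₀ hx₀
    refine ⟨ε / 2, half_pos hε, fun x hx => (ball_subset_ball' ?_).trans hεU⟩
    linarith [mem_ball.mp hx]
  have hr₀ : ball x₀ r ∈ 𝓝 x₀ := ball_mem_nhds x₀ hr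
  have hdiff : ∀ {i : ι}, DifferentiableOn ℂ (f i) U →
      ∀ x ∈ ball x₀ r, DifferentiableAt ℂ (f i) x := fun hi x hx =>
    hi.differentiableAt (hU.mem_nhds (hrU x hx (mem_ball_self hr)))
  have hcauchy : UniformCauchySeqOn (fun i => fderiv ℂ (f i)) l (ball x₀ r) := by
    intro u hu
    obtain ⟨ε, hε, hεu⟩ := Metric.mem_uniformity_dist.mp hu
    filter_upwards [hfg.uniformCauchySeqOn _ (Metric.dist_mem_uniformity
      (show 0 < ε * r / 4 by positivity)), hf.prod_mk hf] with i hi hfi x hx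
    refine hεu ?_
    rw [dist_eq_norm, ← fderiv_sub (hdiff hfi.1 x hx) (hdiff hfi.2 x hx)]
    refine (norm_fderiv_le_of_norm_le (M := ε * r / 4) hr ((hfi.1.sub hfi.2).mono (hrU x hx))
      fun y hy => ?_).trans_lt ?_
    · simpa [dist_eq_norm] using (hi y (hrU x hx hy)).le
    · rw [div_lt_iff₀ hr]
      linarith [mul_pos hε hr]
  choose! g' hg' using fun x (hx : x ∈ ball x₀ r) =>
    cauchy_map_iff_exists_tendsto.mp (hcauchy.cauchy_map hx)
  refine (hasFDerivAt_of_tendstoUniformlyOnFilter (f := f) (l := l) (g' := g')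
    (f' := fun i => fderiv ℂ (f i)) ?_ ?_ ?_).differentiableAt.differentiableWithinAt
  · exact (hcauchy.tendstoUniformlyOn_of_tendsto hg').tendstoUniformlyOnFilter.mono_right
      (le_principal_iff.mpr hr₀)
  · filter_upwards [hf.prod_mk hr₀] with i hi using (hdiff hi.1 i.2 hi.2).hasFDerivAt
  · filter_upwards [hU.mem_nhds hx₀] with x hx using hfg.tendsto_at hx

lemma differentiableOn_tsum_of_cofinite_norm_le [CompleteSpace F] {ι : Type*} {f : ι → E → F}
    {u : ι → ℝ} {U : Set E} (hU : IsOpen U) (hu : Summable u)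
    (hf : ∀ i, DifferentiableOn ℂ (f i) U) (hfu : ∀ᶠ i in cofinite, ∀ x ∈ U, ‖f i x‖ ≤ u i) :
    DifferentiableOn ℂ (fun x => ∑' i, f i x) U :=
  differentiableOn_of_tendstoUniformlyOn hU
    (Eventually.of_forall fun _ => DifferentiableOn.fun_sum fun i _ => hf i)
    (tendstoUniformlyOn_tsum_of_cofinite_eventually hu hfu)

lemma norm_differenceQuotient_sub_fderiv_le {f : E → F} {x v : E} {t : ℂ} {R M : ℝ}
    (hf : DifferentiableOn ℂ f (ball x R)) (hM : ∀ y ∈ ball x R, ‖f y‖ ≤ M) (ht₀ : t ≠ 0)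
    (ht : ‖t • v‖ < R) :
    ‖t⁻¹ • (f (x + t • v) - f x) - fderiv ℂ f x v‖ ≤ 4 * M * ‖v‖ ^ 2 / R ^ 2 * ‖t‖ := by
  have htaylor := norm_sub_sub_fderiv_le hf hM (y := x + t • v) (by simpa [mem_ball_iff_norm])
  rw [add_sub_cancel_left, map_smul, norm_smul] at htaylor
  have ht' : ‖t‖ ≠ 0 := norm_ne_zero_iff.mpr ht₀
  calc ‖t⁻¹ • (f (x + t • v) - f x) - fderiv ℂ f x v‖
      = ‖t‖⁻¹ * ‖f (x + t • v) - f x - t • fderiv ℂ f x v‖ := by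
        rw [← norm_inv, ← norm_smul, smul_sub t⁻¹ (f _ - f _), inv_smul_smul₀ ht₀]
    _ ≤ ‖t‖⁻¹ * (4 * M * (‖t‖ * ‖v‖ / R) ^ 2) := by gcongr
    _ = 4 * M * ‖v‖ ^ 2 / R ^ 2 * ‖t‖ := by field_simp

lemma differentiableOn_fderiv_apply [CompleteSpace F] {f : E → F} {U : Set E} (hU : IsOpen U)
    (hf : DifferentiableOn ℂ f U) (v : E) : DifferentiableOn ℂ (fun x => fderiv ℂ f x v) U := by
  refine differentiableOn_of_locally_differentiableOn fun x₀ hx₀ => ?_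
  have hbdd : ∀ᶠ y in 𝓝 x₀, ‖f y‖ ≤ ‖f x₀‖ + 1 :=
    (hf.differentiableAt (hU.mem_nhds hx₀)).continuousAt.norm.eventually_le_const (by simp)
  obtain ⟨ε, hε, hball⟩ := Metric.eventually_nhds_iff_ball.mp (hbdd.and (hU.mem_nhds hx₀))
  obtain ⟨r, hr, rfl⟩ : ∃ r > 0, ε = r + r := ⟨ε / 2, half_pos hε, (add_halves ε).symm⟩
  have hsub : ∀ x ∈ ball x₀ r, ball x r ⊆ ball x₀ (r + r) := fun x hx =>
    ball_subset_ball' (by linarith [mem_ball.mp hx])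
  have hdiff : ∀ x ∈ ball x₀ r, ∀ y ∈ ball x r, DifferentiableAt ℂ f y := fun x hx y hy =>
    hf.differentiableAt (hU.mem_nhds (hball y (hsub x hx hy)).2)
  have hsmall : ∀ᶠ t in 𝓝[≠] (0 : ℂ), t ≠ 0 ∧ ‖t • v‖ < r :=
    eventually_mem_nhdsWithin.and (nhdsWithin_le_nhds
      ((by fun_prop : Continuous fun t : ℂ => ‖t • v‖).continuousAt.eventually_lt_const (by simpa)))
  refine ⟨ball x₀ r, isOpen_ball, mem_ball_self hr, DifferentiableOn.mono ?_ Set.inter_subset_right⟩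
  -- the difference quotients in the direction `v` converge uniformly on this ball
  refine differentiableOn_of_tendstoUniformlyOn isOpen_ball
    (f := fun (t : ℂ) x => t⁻¹ • (f (x + t • v) - f x)) (l := 𝓝[≠] 0) ?_ ?_
  · filter_upwards [hsmall] with t ⟨_, ht⟩ x hx
    have hshift : DifferentiableAt ℂ (fun x => f (x + t • v)) x :=
      (hdiff x hx _ (by simpa [mem_ball_iff_norm] using ht)).comp x (by fun_prop)
    exact ((hshift.sub (hdiff x hx x (mem_ball_self hr))).const_smul
      t⁻¹).differentiableWithinAt
  · rw [Metric.tendstoUniformlyOn_iff]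
    intro δ hδ
    have hlim : ∀ᶠ t in 𝓝[≠] (0 : ℂ), 4 * (‖f x₀‖ + 1) * ‖v‖ ^ 2 / r ^ 2 * ‖t‖ < δ :=
      nhdsWithin_le_nhds ((by fun_prop : Continuous fun t : ℂ => 4 * (‖f x₀‖ + 1) * ‖v‖ ^ 2 /
        r ^ 2 * ‖t‖).continuousAt.eventually_lt_const (by simpa))
    filter_upwards [hsmall, hlim] with t ⟨ht₀, ht⟩ htδ x hx
    rw [dist_comm, dist_eq_norm]
    exact (norm_differenceQuotient_sub_fderiv_le
      (fun y hy => (hdiff x hx y hy).differentiableWithinAt)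
      (fun y hy => (hball y (hsub x hx hy)).1) ht₀ ht).trans_lt htδ

lemma differentiableOn_fderiv_apply_vectorField [FiniteDimensional ℂ E] [CompleteSpace F]
    {f : E → F} {X : E → E} {U : Set E} (hU : IsOpen U) (hf : DifferentiableOn ℂ f U)
    (hX : DifferentiableOn ℂ X U) : DifferentiableOn ℂ (fun x => fderiv ℂ f x (X x)) U := by
  let e := Module.finBasis ℂ E
  have hcoord (x : E) : fderiv ℂ f x (X x) = ∑ i, e.equivFunL (X x) i • fderiv ℂ f x (e i) := by
    conv_lhs => rw [← e.sum_equivFun (X x), map_sum]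
    simp only [map_smul]
    rfl
  simp only [hcoord]
  refine DifferentiableOn.fun_sum fun i _ => DifferentiableOn.fun_smul ?_
    (differentiableOn_fderiv_apply hU hf (e i))
  exact differentiableOn_pi.mp (e.equivFunL.differentiable.comp_differentiableOn hX) i

end Holomorphic

section Eisenstein

open EisensteinSeries (e2Summand eisSummand)

lemma e2Summand_succ (w : UpperHalfPlane) (a : ℕ) :
    e2Summand (a + 1 : ℕ) w = (-2 * π * Complex.I) ^ 2 *
      ∑' c : ℕ+, (c : ℂ) ^ 1 * Complex.exp (2 * π * Complex.I * w) ^ ((a + 1) * c : ℕ) := by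
  have hqexp := EisensteinSeries.qExpansion_identity_pnat le_rfl
    ⟨((a : ℂ) + 1) * w, by
      simpa using mul_pos (show (0 : ℝ) < (a : ℝ) + 1 by positivity) w.im_pos⟩
  calc e2Summand (a + 1 : ℕ) w = ∑' l : ℤ, 1 / (((a : ℂ) + 1) * w + l) ^ (1 + 1) := by
        simp [e2Summand, eisSummand, zpow_neg]
    _ = (-2 * π * Complex.I) ^ (1 + 1) / (Nat.factorial 1 : ℕ) * ∑' c : ℕ+,
          (c : ℂ) ^ 1 * Complex.exp (2 * π * Complex.I * (((a : ℂ) + 1) * w)) ^ (c : ℕ) := hqexp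
    _ = _ := by
        simp only [Nat.factorial_one, Nat.cast_one, div_one, Nat.reduceAdd]
        congr! 4 with c
        rw [pow_mul, ← Complex.exp_nat_mul _ (a + 1)]
        push_cast
        ring_nf

lemma summable_e2Summand (w : UpperHalfPlane) : Summable fun m : ℤ => e2Summand m w := by
  have hnat : Summable fun m : ℕ => e2Summand (m : ℤ) w := by
    rw [← summable_nat_add_iff 1]
    have hprod := (summable_prod_mul_pow 1 (UpperHalfPlane.norm_exp_two_pi_I_lt_one w)).prod
    rw [summable_pnat_iff_summable_succ (f := fun d : ℕ => ∑' c : ℕ+, (c : ℂ) ^ 1 *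
      Complex.exp (2 * π * Complex.I * w) ^ (d * c : ℕ))] at hprod
    exact (hprod.mul_left _).congr fun a => (e2Summand_succ w a).symm
  rw [summable_int_iff_summable_nat_and_neg]
  exact ⟨hnat, hnat.congr fun m => (EisensteinSeries.e2Summand_even w m).symm⟩

lemma G2_eq_eisenstein (w : UpperHalfPlane) : G2 w = EisensteinSeries.G2 w := by
  have hs := summable_e2Summand w
  have hsplit : ∑' m : {m : ℤ // m ≠ 0}, e2Summand m w + e2Summand 0 w = ∑' m, e2Summand m w := by
    have hcompl : ({m : ℤ | m ≠ 0}ᶜ : Set ℤ) = {0} := by ext; simp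
    rw [← (hs.subtype {m : ℤ | m ≠ 0}).tsum_add_tsum_compl (s := {m : ℤ | m ≠ 0}) (hs.subtype _),
      hcompl, tsum_singleton 0 (e2Summand · w)]
    rfl
  have hzero : e2Summand 0 w = (π : ℂ) ^ 2 / 3 := by
    rw [EisensteinSeries.e2Summand_zero_eq_two_riemannZeta_two, riemannZeta_two]
    ring
  rw [EisensteinSeries.G2, tsum_eq_of_summable_unconditional hs, ← hsplit, hzero, add_comm, G2]
  simp [e2Summand, eisSummand, zpow_neg]

lemma differentiableOn_G2 : DifferentiableOn ℂ G2 {τ | 0 < τ.im} := by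
  have hE2 := UpperHalfPlane.mdifferentiable_iff.mp E2_mdifferentiable
  refine (hE2.const_mul (2 * riemannZeta 2)).congr fun τ hτ => ?_
  have hζ : riemannZeta 2 ≠ 0 := riemannZeta_ne_zero_of_one_le_re (by simp)
  simp only [Function.comp_apply, UpperHalfPlane.ofComplex_apply_of_im_pos hτ, EisensteinSeries.E2,
    Pi.smul_apply, smul_eq_mul, ← G2_eq_eisenstein]
  field_simp

end Eisenstein

section Modular

variable (g : Matrix.SpecialLinearGroup (Fin 2) ℤ)

/-- The automorphy factor `Cτ + D` of `g = (A B; C D)`. -/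
def automorphyFactor (τ : ℂ) : ℂ := (g 1 0 : ℤ) * τ + (g 1 1 : ℤ)

/-- The fractional linear action `τ ↦ (Aτ + B) / (Cτ + D)`, on all of `ℂ` rather than on
`UpperHalfPlane` so that it can be differentiated; meaningless where `Cτ + D = 0`. -/
noncomputable def moebius (τ : ℂ) : ℂ :=
  ((g 0 0 : ℤ) * τ + (g 0 1 : ℤ)) / automorphyFactor g τ

lemma automorphyFactor_ne_zero {τ : ℂ} (hτ : 0 < τ.im) : automorphyFactor g τ ≠ 0 := by
  have h := UpperHalfPlane.denom_ne_zero g ⟨τ, hτ⟩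
  rwa [ModularGroup.denom_apply] at h

lemma coe_smul_eq_moebius (w : UpperHalfPlane) : ((g • w : UpperHalfPlane) : ℂ) = moebius g w := by
  simp [UpperHalfPlane.specialLinearGroup_apply, moebius, automorphyFactor]

lemma im_moebius_pos {τ : ℂ} (hτ : 0 < τ.im) : 0 < (moebius g τ).im := by
  rw [← coe_smul_eq_moebius g ⟨τ, hτ⟩]
  exact UpperHalfPlane.im_pos _

lemma det_eq_one : g 0 0 * g 1 1 - g 0 1 * g 1 0 = 1 := by
  rw [← Matrix.det_fin_two]
  exact g.det_coe

lemma hasDerivAt_automorphyFactor (τ : ℂ) : HasDerivAt (automorphyFactor g) (g 1 0 : ℤ) τ :=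
  (hasDerivAt_const_mul _).add_const _

lemma hasDerivAt_moebius {τ : ℂ} (hτ : 0 < τ.im) :
    HasDerivAt (moebius g) (1 / automorphyFactor g τ ^ 2) τ := by
  have hnum : HasDerivAt (fun τ : ℂ => (g 0 0 : ℤ) * τ + (g 0 1 : ℤ)) (g 0 0 : ℤ) τ :=
    (hasDerivAt_const_mul _).add_const _
  have hdet : ((g 0 0 : ℤ) * (g 1 1 : ℤ) - (g 0 1 : ℤ) * (g 1 0 : ℤ) : ℂ) = 1 := by
    exact_mod_cast det_eq_one g
  refine (hnum.fun_div (hasDerivAt_automorphyFactor g τ)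
    (automorphyFactor_ne_zero g hτ)).congr_deriv ?_
  congr 1
  rw [automorphyFactor]
  linear_combination hdet

lemma G2_eq_G2_moebius {τ : ℂ} (hτ : 0 < τ.im) :
    G2 τ = G2 (moebius g τ) / automorphyFactor g τ ^ 2 +
      2 * π * Complex.I * (g 1 0 : ℤ) / automorphyFactor g τ := by
  have h := congrFun (EisensteinSeries.G2_slash_action g) ⟨τ, hτ⟩
  rw [ModularForm.SL_slash_apply, Pi.sub_apply, EisensteinSeries.D2, ModularGroup.denom_apply,
    ← G2_eq_eisenstein, ← G2_eq_eisenstein, coe_smul_eq_moebius] at h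
  simp only [zpow_neg, zpow_ofNat] at h
  rw [automorphyFactor, div_eq_mul_inv, h]
  simp

/-- The bijection `(k, l) ↦ (k, l) g` of `ℤ² ∖ {0}`. -/
def latticeEquiv : {p : ℤ × ℤ // p ≠ (0, 0)} ≃ {p : ℤ × ℤ // p ≠ (0, 0)} :=
  Equiv.subtypeEquiv
    { toFun := fun p => (p.1 * g 0 0 + p.2 * g 1 0, p.1 * g 0 1 + p.2 * g 1 1)
      invFun := fun p => (p.1 * g 1 1 - p.2 * g 1 0, p.2 * g 0 0 - p.1 * g 0 1)
      left_inv := fun p => by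
        ext
        · linear_combination p.1 * det_eq_one g
        · linear_combination p.2 * det_eq_one g
      right_inv := fun p => by
        ext
        · linear_combination p.1 * det_eq_one g
        · linear_combination p.2 * det_eq_one g }
    (fun p => by
      refine not_congr ⟨fun hp => by simp [hp], fun hp => ?_⟩
      simp only [Equiv.coe_fn_mk, Prod.mk.injEq] at hp
      ext
      · linear_combination (g 1 1) * hp.1 - (g 1 0) * hp.2 - p.1 * det_eq_one g
      · linear_combination (g 0 0) * hp.2 - (g 0 1) * hp.1 - p.2 * det_eq_one g)

lemma mul_moebius_add {τ : ℂ} (hτ : 0 < τ.im) (k l : ℂ) :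
    k * moebius g τ + l = ((k * (g 0 0 : ℤ) + l * (g 1 0 : ℤ)) * τ +
      (k * (g 0 1 : ℤ) + l * (g 1 1 : ℤ))) / automorphyFactor g τ := by
  have hJ := automorphyFactor_ne_zero g hτ
  rw [moebius]
  field_simp
  rw [automorphyFactor]
  ring

lemma wp1_moebius {τ : ℂ} (hτ : 0 < τ.im) (w : ℂ) :
    wp1 (w / automorphyFactor g τ) (moebius g τ) = automorphyFactor g τ * wp1 w τ := by
  have hJ := automorphyFactor_ne_zero g hτ
  rw [wp1, wp1, mul_add, ← tsum_mul_left]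
  congr 1
  · field_simp
  refine (tsum_congr fun p => ?_).trans ((latticeEquiv g).tsum_eq _)
  simp only [latticeEquiv, Equiv.subtypeEquiv_apply, Equiv.coe_fn_mk]
  push_cast
  rw [mul_moebius_add g hτ, ← sub_div, one_div_div, one_div_div, div_pow, div_div_div_eq]
  field_simp

end Modular

section Lattice

open Metric Filter Topology

/-- The pairs `(w, τ)` with `Im τ > 0` and `w ∉ Λ_τ`, where `℘₁(w;τ)` is holomorphic. -/
def latticeCompl : Set (ℂ × ℂ) :=
  {x | 0 < x.2.im ∧ ∀ k l : ℤ, x.1 ≠ (k : ℂ) * x.2 + (l : ℂ)}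

/-- In the real coordinates `w = s * τ + t`, the lattice `Λ_τ` is `ℤ²`. -/
lemma isOpen_latticeCompl : IsOpen latticeCompl := by
  let s : ℂ × ℂ → ℝ := fun x => x.1.im / x.2.im
  let t : ℂ × ℂ → ℝ := fun x => x.1.re - s x * x.2.re
  have hs : ContinuousOn s {x | 0 < x.2.im} :=
    ContinuousOn.div (by fun_prop) (by fun_prop) fun x hx => ne_of_gt hx
  have hst : ContinuousOn (fun x => (s x, t x)) {x | 0 < x.2.im} :=
    hs.prodMk (ContinuousOn.sub (by fun_prop) (hs.mul (by fun_prop)))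
  have hclosed : IsClosed (Set.range ((↑) : ℤ → ℝ) ×ˢ Set.range ((↑) : ℤ → ℝ)) :=
    Int.isClosedEmbedding_coe_real.isClosed_range.prod Int.isClosedEmbedding_coe_real.isClosed_range
  have hopen : IsOpen {x : ℂ × ℂ | 0 < x.2.im} := isOpen_lt continuous_const (by fun_prop)
  convert hst.isOpen_inter_preimage hopen hclosed.isOpen_compl using 1
  ext ⟨w, τ⟩
  refine and_congr_right fun hτ : 0 < τ.im => ?_
  have hcoord (k l : ℤ) : w = k * τ + l ↔ (k : ℝ) = s (w, τ) ∧ (l : ℝ) = t (w, τ) := by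
    have him : w.im = k * τ.im ↔ (k : ℝ) = s (w, τ) := by rw [eq_div_iff hτ.ne', eq_comm]
    simp only [Complex.ext_iff, add_re, mul_re, intCast_re, intCast_im, add_im, mul_im, zero_mul,
      sub_zero, add_zero, him, t]
    constructor
    · rintro ⟨hre, hk⟩
      exact ⟨hk, by rw [← hk]; linarith⟩
    · rintro ⟨hk, hl⟩
      exact ⟨by rw [← hk] at hl; linarith, hk⟩
  simpa [hcoord, imp_forall_iff] using forall_comm

lemma norm_finTwo {G : Type*} [SeminormedAddGroup G] (a b : G) :
    ‖![a, b]‖ = ‖(a, b)‖ := by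
  simp [Pi.norm_def, Prod.norm_def, Fin.univ_succ]

lemma exists_forall_mul_norm_le_norm_lattice {τ₀ : ℂ} (hτ₀ : 0 < τ₀.im) :
    ∃ c > 0, ∀ᶠ τ in 𝓝 τ₀, ∀ p : ℤ × ℤ, c * ‖p‖ ≤ ‖(p.1 : ℂ) * τ + p.2‖ := by
  set r := EisensteinSeries.r ⟨τ₀, hτ₀⟩
  have hr : 0 < r := EisensteinSeries.r_pos _
  have hcenter (p : ℤ × ℤ) : r * ‖p‖ ≤ ‖(p.1 : ℂ) * τ₀ + p.2‖ := by
    rcases eq_or_ne p 0 with rfl | hp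
    · simp
    have hp' : ![p.1, p.2] ≠ 0 := by
      rwa [← norm_ne_zero_iff, norm_finTwo, norm_ne_zero_iff]
    simpa [norm_finTwo] using EisensteinSeries.r_mul_max_le ⟨τ₀, hτ₀⟩ hp'
  refine ⟨r / 2, half_pos hr, ?_⟩
  filter_upwards [ball_mem_nhds τ₀ (half_pos hr)] with τ hτ p
  have hmove : ‖(p.1 : ℂ) * (τ₀ - τ)‖ ≤ ‖p‖ * (r / 2) := by
    rw [norm_mul, norm_intCast, ← Int.norm_eq_abs]
    gcongr
    · exact norm_fst_le p
    · exact (mem_ball_iff_norm'.mp hτ).le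
  have htri := norm_add_le ((p.1 : ℂ) * τ + p.2) (p.1 * (τ₀ - τ))
  rw [show (p.1 : ℂ) * τ + p.2 + p.1 * (τ₀ - τ) = p.1 * τ₀ + p.2 by ring] at htri
  linarith [hcenter p]

lemma norm_wp1_summand_le {w ω : ℂ} {r R : ℝ} (hr : 0 < r) (hw : ‖w‖ ≤ R) (hω : r ≤ ‖ω‖)
    (hR : 2 * R ≤ r) : ‖1 / (w - ω) + 1 / ω + w / ω ^ 2‖ ≤ 2 * R ^ 2 / r ^ 3 := by
  have hdist : r / 2 ≤ ‖w - ω‖ := by linarith [norm_sub_norm_le ω w, norm_sub_rev ω w]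
  have hω₀ : ω ≠ 0 := norm_pos_iff.mp (hr.trans_le hω)
  have hne : w - ω ≠ 0 := norm_pos_iff.mp ((half_pos hr).trans_le hdist)
  calc ‖1 / (w - ω) + 1 / ω + w / ω ^ 2‖ = ‖w ^ 2 / (ω ^ 2 * (w - ω))‖ := by
        congr 1
        field_simp
        ring
    _ = ‖w‖ ^ 2 / (‖ω‖ ^ 2 * ‖w - ω‖) := by rw [norm_div, norm_mul, norm_pow, norm_pow]
    _ ≤ R ^ 2 / (r ^ 2 * (r / 2)) := by gcongr
    _ = 2 * R ^ 2 / r ^ 3 := by field_simp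

lemma summable_inv_norm_intProd_pow_three : Summable fun p : ℤ × ℤ => (‖p‖ ^ 3)⁻¹ := by
  have h := (finTwoArrowEquiv ℤ).symm.summable_iff.mpr
    (EisensteinSeries.summable_one_div_norm_rpow (k := 3) (by norm_num))
  refine h.congr fun p => ?_
  rw [Function.comp_apply, finTwoArrowEquiv_symm_apply, norm_finTwo, Real.rpow_neg (norm_nonneg _)]
  norm_cast

lemma eventually_cofinite_le_mul_norm {c : ℝ} (hc : 0 < c) (R : ℝ) :
    ∀ᶠ p : ℤ × ℤ in cofinite, R ≤ c * ‖p‖ := by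
  rw [← cocompact_eq_cofinite]
  exact ((tendsto_norm_cocompact_atTop (E := ℤ × ℤ)).const_mul_atTop hc).eventually_ge_atTop R

lemma lattice_ne_zero {τ : ℂ} (hτ : 0 < τ.im) {p : ℤ × ℤ} (hp : p ≠ 0) :
    (p.1 : ℂ) * τ + p.2 ≠ 0 := by
  intro h
  have h₁ : p.1 = 0 := by simpa [hτ.ne'] using congrArg Complex.im h
  have h₂ : p.2 = 0 := by simpa [h₁] using congrArg Complex.re h
  exact hp (Prod.ext h₁ h₂)

lemma differentiableOn_wp1 :
    DifferentiableOn ℂ (fun x : ℂ × ℂ => wp1 x.1 x.2) latticeCompl := by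
  refine differentiableOn_of_locally_differentiableOn ?_
  rintro ⟨w₀, τ₀⟩ ⟨hτ₀, -⟩
  obtain ⟨c, hc, hbound⟩ := exists_forall_mul_norm_le_norm_lattice hτ₀
  obtain ⟨T, hT, hTopen, hτ₀T⟩ := _root_.eventually_nhds_iff.mp hbound
  set R : ℝ := ‖w₀‖ + 1
  have hU : IsOpen (ball (0 : ℂ) R ×ˢ T) := isOpen_ball.prod hTopen
  refine ⟨ball 0 R ×ˢ T, hU, ⟨by simp [R], hτ₀T⟩, DifferentiableOn.add ?_ ?_⟩
  · rintro x ⟨⟨-, hx⟩, -⟩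
    have hx₀ : x.1 ≠ 0 := by simpa using hx 0 0
    exact DifferentiableAt.differentiableWithinAt (by fun_prop (disch := exact hx₀))
  refine differentiableOn_tsum_of_cofinite_norm_le (isOpen_latticeCompl.inter hU)
    ((summable_inv_norm_intProd_pow_three.mul_left (2 * R ^ 2 / c ^ 3)).comp_injective
      Subtype.val_injective)
    (fun p => ?_) ?_
  · rintro x ⟨⟨hτ, hx⟩, -⟩
    have hω : (p.1.1 : ℂ) * x.2 + p.1.2 ≠ 0 := lattice_ne_zero hτ p.2
    have hω₂ := pow_ne_zero 2 hω
    have hne := sub_ne_zero.mpr (hx p.1.1 p.1.2)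
    exact DifferentiableAt.differentiableWithinAt (by fun_prop (disch := assumption))
  · filter_upwards [Subtype.val_injective.tendsto_cofinite.eventually
      (eventually_cofinite_le_mul_norm hc (2 * R))] with p hp x ⟨_, hx₁, hx₂⟩
    have hp₀ : 0 < ‖(p : ℤ × ℤ)‖ := norm_pos_iff.mpr p.2
    refine (norm_wp1_summand_le (mul_pos hc hp₀) (mem_ball_zero_iff.mp hx₁).le
      (hT _ hx₂ p) hp).trans_eq ?_
    rw [Function.comp_apply]
    field_simp

lemma isOpen_Uset (n : ℕ) : IsOpen (Uset n) := by
  have h : Uset n = {p | 0 < p.2.im} ∩ ⋂ (i : Fin n) (j : Fin n) (_ : i ≠ j),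
      (fun p : (Fin n → ℂ) × ℂ => (p.1 i - p.1 j, p.2)) ⁻¹' latticeCompl := by
    ext p
    simp only [Uset, latticeCompl, Set.mem_ofPred_eq, Set.mem_inter_iff, Set.mem_iInter,
      Set.mem_preimage]
    exact ⟨fun hp => ⟨hp.1, fun i j hij => ⟨hp.1, hp.2 i j hij⟩⟩,
      fun hp => ⟨hp.1, fun i j hij => (hp.2 i j hij).2⟩⟩
  rw [h]
  refine (isOpen_lt continuous_const (by fun_prop)).inter ?_
  exact isOpen_iInter_of_finite fun i => isOpen_iInter_of_finite fun j =>
    isOpen_iInter_of_finite fun _ => isOpen_latticeCompl.preimage (by fun_prop)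

end Lattice

section JacobiAction

variable (g : Matrix.SpecialLinearGroup (Fin 2) ℤ) {n : ℕ}

/-- The action `(z, τ) ↦ (z / (Cτ + D), (Aτ + B) / (Cτ + D))` of `SL₂(ℤ)` on `Uset n`. -/
noncomputable def jacobiAct (p : (Fin n → ℂ) × ℂ) : (Fin n → ℂ) × ℂ :=
  (fun i => p.1 i / automorphyFactor g p.2, moebius g p.2)

lemma jacobiAct_mem_Uset {p : (Fin n → ℂ) × ℂ} (hp : p ∈ Uset n) : jacobiAct g p ∈ Uset n := by
  refine ⟨im_moebius_pos g hp.1, fun i j hij k l hkl => ?_⟩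
  simp only [jacobiAct] at hkl
  rw [mul_moebius_add g hp.1, ← sub_div,
    div_left_inj' (automorphyFactor_ne_zero g hp.1)] at hkl
  exact hp.2 i j hij (k * g 0 0 + l * g 1 0) (k * g 0 1 + l * g 1 1) (by exact_mod_cast hkl)

/-- The vector field `ξ_j = 2πi ∂_τ + G₂ ∑ z_i ∂_{z_i} − ∑_{i ≠ j} ℘₁(z_i − z_j) ∂_{z_i}`, the
first-order part of `𝒟_j(a)`. -/
noncomputable def heatField (j : Fin n) (p : (Fin n → ℂ) × ℂ) : (Fin n → ℂ) × ℂ :=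
  (fun i => G2 p.2 * p.1 i - if i ≠ j then wp1 (p.1 i - p.1 j) p.2 else 0, 2 * π * Complex.I)

lemma differentiableOn_G2_snd :
    DifferentiableOn ℂ (fun p : (Fin n → ℂ) × ℂ => G2 p.2) (Uset n) :=
  differentiableOn_G2.comp differentiableOn_snd fun _ hp => hp.1

lemma differentiableOn_heatField (j : Fin n) : DifferentiableOn ℂ (heatField j) (Uset n) := by
  refine DifferentiableOn.prodMk (differentiableOn_pi.mpr fun i => ?_) (by fun_prop)
  refine (differentiableOn_G2_snd.fun_mul (by fun_prop)).fun_sub ?_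
  split_ifs with hij
  · exact differentiableOn_wp1.comp (f := fun p : (Fin n → ℂ) × ℂ => (p.1 i - p.1 j, p.2))
      (by fun_prop) fun p hp => ⟨hp.1, hp.2 i j hij⟩
  · fun_prop

lemma differentiableOn_jacobiAct : DifferentiableOn ℂ (jacobiAct g) (Uset n) := by
  intro p hp
  have hJ : DifferentiableAt ℂ (fun p : (Fin n → ℂ) × ℂ => automorphyFactor g p.2) p :=
    (hasDerivAt_automorphyFactor g p.2).differentiableAt.comp p differentiableAt_snd
  have hmoebius : DifferentiableAt ℂ (fun p : (Fin n → ℂ) × ℂ => moebius g p.2) p :=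
    (hasDerivAt_moebius g hp.1).differentiableAt.comp p differentiableAt_snd
  have hz (i : Fin n) :
      DifferentiableAt ℂ (fun p : (Fin n → ℂ) × ℂ => p.1 i / automorphyFactor g p.2) p := by
    simp only [div_eq_mul_inv]
    exact DifferentiableAt.fun_mul (by fun_prop) (hJ.fun_inv (automorphyFactor_ne_zero g hp.1))
  exact ((differentiableAt_pi.mpr hz).prodMk hmoebius).differentiableWithinAt

/-- The quasimodularity of `G₂` is what makes the vector field equivariant. -/
lemma hasDerivAt_jacobiAct_comp {j : Fin n} {c : ℂ → (Fin n → ℂ) × ℂ} {t : ℂ} (ht : c t ∈ Uset n)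
    (hc : HasDerivAt c (heatField j (c t)) t) :
    HasDerivAt (fun s => jacobiAct g (c s))
      ((automorphyFactor g (c t).2 ^ 2)⁻¹ • heatField j (jacobiAct g (c t))) t := by
  have hJ₀ := automorphyFactor_ne_zero g ht.1
  have hτ : HasDerivAt (fun s => (c s).2) (2 * π * Complex.I) t := hc.snd
  have hJ := (hasDerivAt_automorphyFactor g (c t).2).comp t hτ
  refine HasDerivAt.prodMk (hasDerivAt_pi.mpr fun i => ?_) ?_
  · have hz : HasDerivAt (fun s => (c s).1 i) ((heatField j (c t)).1 i) t :=
      hasDerivAt_pi.mp hc.fst i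
    refine (hz.fun_div hJ hJ₀).congr_deriv ?_
    simp only [heatField, jacobiAct, Pi.smul_apply, smul_eq_mul, ← sub_div,
      wp1_moebius g ht.1, Function.comp_apply]
    rw [G2_eq_G2_moebius g ht.1]
    split_ifs <;> field_simp <;> ring
  · refine ((hasDerivAt_moebius g ht.1).comp t hτ).congr_deriv ?_
    simp only [heatField, smul_eq_mul, one_div]

end JacobiAction

section Families

open Function (uncurry)

variable {n N : ℕ} {Φ Ψ : (Fin n → ℕ) → (Fin n → ℂ) → ℂ → ℂ}

/-- The family `Φ` belongs to `χ`, with `φ_μ = 0` as soon as some `μ_i` is at least `N`. -/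
structure IsHolomorphicFamily (N : ℕ) (Φ : (Fin n → ℕ) → (Fin n → ℂ) → ℂ → ℂ) : Prop where
  differentiableOn : ∀ μ, DifferentiableOn ℂ (uncurry (Φ μ)) (Uset n)
  eq_zero : ∀ μ : Fin n → ℕ, (∃ i, N ≤ μ i) → Φ μ = 0

lemma IsHolomorphicFamily.differentiableAt (hΦ : IsHolomorphicFamily N Φ) (μ : Fin n → ℕ)
    {p : (Fin n → ℂ) × ℂ} (hp : p ∈ Uset n) : DifferentiableAt ℂ (uncurry (Φ μ)) p :=
  (hΦ.differentiableOn μ).differentiableAt ((isOpen_Uset n).mem_nhds hp)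

lemma map_prod_eq_sum_single {ι : Type*} [Fintype ι] [DecidableEq ι]
    (f : (ι → ℂ) × ℂ →L[ℂ] ℂ) (v : ι → ℂ) (t : ℂ) :
    f (v, t) = ∑ i, v i * f (Pi.single i 1, 0) + t * f (0, 1) := by
  have hv : (v, t) = ∑ i, v i • ((Pi.single i 1 : ι → ℂ), (0 : ℂ)) +
      t • ((0 : ι → ℂ), (1 : ℂ)) := by
    refine Prod.ext ?_ ?_
    · simpa [Prod.fst_sum] using pi_eq_sum_univ' v
    · simp [Prod.snd_sum]
  simp only [hv, map_add, map_sum, map_smul, smul_eq_mul]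

lemma DOp_eq_fderiv {a : ℂ} {j : Fin n} {μ : Fin n → ℕ} {p : (Fin n → ℂ) × ℂ}
    (h : DifferentiableAt ℂ (uncurry (Φ μ)) p) :
    uncurry (DOp n a j Φ μ) p = fderiv ℂ (uncurry (Φ μ)) p (heatField j p) +
      G2 p.2 * (a * uncurry (Φ μ) p + ∑ i, uncurry (Φ (μ + Pi.single i 1)) p) := by
  obtain ⟨z, τ⟩ := p
  have hτ : deriv (fun t => Φ μ z t) τ = fderiv ℂ (uncurry (Φ μ)) (z, τ) (0, 1) := by
    have hline : HasDerivAt (fun t => (z, t)) ((0 : Fin n → ℂ), (1 : ℂ)) τ :=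
      (hasDerivAt_const τ z).prodMk (hasDerivAt_id τ)
    exact (h.hasFDerivAt.comp_hasDerivAt τ hline).deriv
  have hz (i : Fin n) : deriv (fun s => Φ μ (Function.update z i s) τ) (z i) =
      fderiv ℂ (uncurry (Φ μ)) (z, τ) (Pi.single i 1, 0) := by
    have hline : HasDerivAt (fun s => (Function.update z i s, τ))
        ((Pi.single i 1 : Fin n → ℂ), (0 : ℂ)) (z i) :=
      (hasDerivAt_update z i (z i)).prodMk (hasDerivAt_const (z i) τ)
    have hz₀ : HasFDerivAt (uncurry (Φ μ)) (fderiv ℂ (uncurry (Φ μ)) (z, τ))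
        (Function.update z i (z i), τ) := by
      simpa using h.hasFDerivAt
    exact (hz₀.comp_hasDerivAt (z i) hline).deriv
  rw [Function.uncurry_apply_pair, DOp, heatField, map_prod_eq_sum_single, hτ]
  simp only [Function.uncurry_apply_pair, hz, sub_mul, Finset.sum_sub_distrib, ite_mul, zero_mul,
    ← Finset.sum_filter, Finset.mul_sum, mul_assoc]
  ring

lemma DOp_congr (h : ∀ μ, Set.EqOn (uncurry (Φ μ)) (uncurry (Ψ μ)) (Uset n))
    (hΨ : ∀ μ, DifferentiableOn ℂ (uncurry (Ψ μ)) (Uset n)) (a : ℂ) (j : Fin n) (μ : Fin n → ℕ) :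
    Set.EqOn (uncurry (DOp n a j Φ μ)) (uncurry (DOp n a j Ψ μ)) (Uset n) := by
  intro p hp
  have hnhds := (isOpen_Uset n).mem_nhds hp
  have hev : uncurry (Φ μ) =ᶠ[nhds p] uncurry (Ψ μ) := (h μ).eventuallyEq_of_mem hnhds
  have hdiff := (hΨ μ).differentiableAt hnhds
  have hval (ν : Fin n → ℕ) : uncurry (Φ ν) p = uncurry (Ψ ν) p := h ν hp
  simp only [DOp_eq_fderiv hdiff, DOp_eq_fderiv (hev.differentiableAt_iff.mpr hdiff),
    hev.fderiv_eq, hval]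

lemma IsHolomorphicFamily.dOp (hΦ : IsHolomorphicFamily N Φ) (a : ℂ) (j : Fin n) :
    IsHolomorphicFamily N (DOp n a j Φ) where
  differentiableOn μ := by
    have hfderiv : DifferentiableOn ℂ
        (fun p => fderiv ℂ (uncurry (Φ μ)) p (heatField j p)) (Uset n) :=
      differentiableOn_fderiv_apply_vectorField (isOpen_Uset n) (hΦ.differentiableOn μ)
        (differentiableOn_heatField j)
    have hshift : DifferentiableOn ℂ
        (fun p => ∑ i, uncurry (Φ (μ + Pi.single i 1)) p) (Uset n) :=
      DifferentiableOn.fun_sum fun i _ => hΦ.differentiableOn _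
    exact (hfderiv.add (differentiableOn_G2_snd.mul
      (((hΦ.differentiableOn μ).const_mul a).add hshift))).congr
        fun p hp => DOp_eq_fderiv (hΦ.differentiableAt μ hp)
  eq_zero μ := fun ⟨i, hi⟩ => by
    have hshift (k : Fin n) : Φ (μ + Pi.single k 1) = 0 :=
      hΦ.eq_zero _ ⟨i, hi.trans (by simp)⟩
    funext z τ
    simp [DOp, hΦ.eq_zero μ ⟨i, hi⟩, hshift]

lemma IsHolomorphicFamily.dIter (hΦ : IsHolomorphicFamily N Φ) (α : ℂ) (j : Fin n) (k : ℕ) :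
    IsHolomorphicFamily N (DIter n α j k Φ) := by
  induction k with
  | zero => exact hΦ
  | succ k ih => exact ih.dOp _ j

end Families

section ExpShift

variable {ι : Type*} [Fintype ι]

/-- The coefficient `L ^ |ν| / ν!` of the exponential series in several variables. -/
noncomputable def expCoeff (L : ℂ) (ν : ι → ℕ) : ℂ :=
  L ^ (∑ i, ν i) / ∏ i, (Nat.factorial (ν i) : ℂ)

/-- The `i`-th summand `ν i * L ^ (|ν| - 1) / ν!` of the derivative of `expCoeff L ν` in `L`. -/
noncomputable def expCoeffDeriv (L : ℂ) (ν : ι → ℕ) (i : ι) : ℂ :=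
  ν i * L ^ (∑ k, ν k - 1) / ∏ k, (Nat.factorial (ν k) : ℂ)

lemma hasDerivAt_expCoeff (ν : ι → ℕ) (L : ℂ) :
    HasDerivAt (fun L => expCoeff L ν) (∑ i, expCoeffDeriv L ν i) L := by
  refine ((hasDerivAt_pow (∑ i, ν i) L).div_const _).congr_deriv ?_
  simp only [expCoeffDeriv, ← Finset.sum_div, ← Finset.sum_mul, Nat.cast_sum]

variable [DecidableEq ι]

lemma expCoeffDeriv_add_single (L : ℂ) (ν : ι → ℕ) (i : ι) :
    expCoeffDeriv L (ν + Pi.single i 1) i = expCoeff L ν := by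
  have hdegree : ∑ k, (ν + Pi.single i 1 : ι → ℕ) k = ∑ k, ν k + 1 := by
    simp [Finset.sum_add_distrib]
  have hfactorial : ∏ k, (Nat.factorial ((ν + Pi.single i 1 : ι → ℕ) k) : ℂ) =
      (ν i + 1) * ∏ k, (Nat.factorial (ν k) : ℂ) := by
    rw [Fintype.prod_eq_mul_prod_compl i, Fintype.prod_eq_mul_prod_compl i, ← mul_assoc]
    congr 1
    · simp [Nat.factorial_succ]
    · refine Finset.prod_congr rfl fun k hk => ?_
      have hki : k ≠ i := by simpa using hk
      simp [hki]
  have hne : (ν i + 1 : ℂ) ≠ 0 := Nat.cast_add_one_ne_zero _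
  rw [expCoeffDeriv, expCoeff, hdegree, hfactorial, Pi.add_apply, Pi.single_eq_same,
    Nat.add_sub_cancel, Nat.cast_add, Nat.cast_one, mul_div_mul_left _ _ hne]

lemma tsum_expCoeffDeriv_mul (L : ℂ) (i : ι) (f : (ι → ℕ) → ℂ) :
    ∑' ν, expCoeffDeriv L ν i * f ν = ∑' ν, expCoeff L ν * f (ν + Pi.single i 1) := by
  rw [← (add_left_injective (Pi.single i 1 : ι → ℕ)).tsum_eq]
  · simp only [expCoeffDeriv_add_single]
  · intro ν hν
    have hi : ν i ≠ 0 := fun h₀ => hν (by simp [expCoeffDeriv, h₀])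
    have hle : Pi.single i 1 ≤ ν :=
      update_le_iff.mpr ⟨Nat.one_le_iff_ne_zero.mpr hi, fun k _ => Nat.zero_le _⟩
    exact ⟨ν - Pi.single i 1, tsub_add_cancel_of_le hle⟩

/-- The value at `ν = 0` of `exp (L * S)` applied to `f`, where `S` is the sum over `i` of the
shifts `f ↦ f (· + e_i)`; the series is truncated to `ν i < N`, which loses nothing if `f ν = 0`
as soon as some `ν i` is at least `N`. -/
noncomputable def expShift (N : ℕ) (L : ℂ) : ((ι → ℕ) → ℂ) →ₗ[ℂ] ℂ :=
  ∑ ν ∈ Fintype.piFinset fun _ => Finset.range N, expCoeff L ν • LinearMap.proj ν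

lemma expShift_apply (N : ℕ) (L : ℂ) (f : (ι → ℕ) → ℂ) :
    expShift N L f = ∑ ν ∈ Fintype.piFinset fun _ => Finset.range N, expCoeff L ν * f ν := by
  simp [expShift]

lemma tsum_mul_eq_sum_piFinset {N : ℕ} (c : (ι → ℕ) → ℂ) {f : (ι → ℕ) → ℂ}
    (hf : ∀ ν, (∃ i, N ≤ ν i) → f ν = 0) :
    ∑' ν, c ν * f ν = ∑ ν ∈ Fintype.piFinset fun _ => Finset.range N, c ν * f ν := by
  refine tsum_eq_sum fun ν hν => ?_
  rw [hf ν (by simpa using hν), mul_zero]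

lemma hasDerivAt_expShift {N : ℕ} {L : ℂ → ℂ} {L' t : ℂ} (hL : HasDerivAt L L' t)
    {f : ℂ → (ι → ℕ) → ℂ} {f' : (ι → ℕ) → ℂ} (hf : ∀ ν, HasDerivAt (fun s => f s ν) (f' ν) t)
    (hN : ∀ ν, (∃ i, N ≤ ν i) → f t ν = 0) :
    HasDerivAt (fun s => expShift N (L s) (f s))
      (L' * expShift N (L t) (fun ν => ∑ i, f t (ν + Pi.single i 1)) + expShift N (L t) f') t := by
  have hshift (i : ι) : expShift N (L t) (fun ν => f t (ν + Pi.single i 1)) =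
      ∑ ν ∈ Fintype.piFinset fun _ => Finset.range N, expCoeffDeriv (L t) ν i * f t ν := by
    rw [expShift_apply, ← tsum_mul_eq_sum_piFinset _ hN, tsum_expCoeffDeriv_mul,
      tsum_mul_eq_sum_piFinset]
    exact fun ν ⟨k, hk⟩ => hN _ ⟨k, hk.trans (by simp)⟩
  have hsum : expShift N (L t) (fun ν => ∑ i, f t (ν + Pi.single i 1)) =
      ∑ ν ∈ Fintype.piFinset fun _ => Finset.range N, (∑ i, expCoeffDeriv (L t) ν i) * f t ν := by
    rw [← Finset.sum_fn, map_sum]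
    simp only [hshift, Finset.sum_mul]
    exact Finset.sum_comm
  simp only [expShift_apply] at hsum ⊢
  refine (HasDerivAt.fun_sum fun ν _ =>
    ((hasDerivAt_expCoeff ν (L t)).comp t hL).fun_mul (hf ν)).congr_deriv ?_
  rw [hsum, Finset.mul_sum, ← Finset.sum_add_distrib]
  exact Finset.sum_congr rfl fun ν _ => by simp only [Function.comp_apply]; ring

end ExpShift

section Slash

open Function (uncurry)

variable (g : Matrix.SpecialLinearGroup (Fin 2) ℤ) {n N : ℕ}
  {Φ : (Fin n → ℕ) → (Fin n → ℂ) → ℂ → ℂ}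

lemma automorphyFactor_mem_slitPlane (hg : g 1 0 ≠ 0) {τ : ℂ} (hτ : 0 < τ.im) :
    automorphyFactor g τ ∈ Complex.slitPlane :=
  Or.inr (by simpa [automorphyFactor] using ⟨hg, hτ.ne'⟩)

lemma hasDerivAt_log_automorphyFactor {τ : ℂ} (hτ : 0 < τ.im) :
    HasDerivAt (fun τ => Complex.log (automorphyFactor g τ))
      ((g 1 0 : ℤ) / automorphyFactor g τ) τ := by
  by_cases hg : g 1 0 = 0
  · simpa [hg, automorphyFactor] using hasDerivAt_const τ (Complex.log (g 1 1 : ℤ))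
  · exact (hasDerivAt_automorphyFactor g τ).clog (automorphyFactor_mem_slitPlane g hg hτ)

lemma automorphyFactor_cpow_eq_exp (a : ℂ) {τ : ℂ} (hτ : 0 < τ.im) :
    automorphyFactor g τ ^ a = Complex.exp (Complex.log (automorphyFactor g τ) * a) :=
  Complex.cpow_def_of_ne_zero (automorphyFactor_ne_zero g hτ) a

lemma hasDerivAt_automorphyFactor_cpow (a : ℂ) {τ : ℂ} (hτ : 0 < τ.im) :
    HasDerivAt (fun τ => automorphyFactor g τ ^ a)
      (automorphyFactor g τ ^ a * ((g 1 0 : ℤ) / automorphyFactor g τ * a)) τ := by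
  have hexp := ((hasDerivAt_log_automorphyFactor g hτ).mul_const a).cexp
  rw [← automorphyFactor_cpow_eq_exp g a hτ] at hexp
  refine hexp.congr_of_eventuallyEq ?_
  filter_upwards [(isOpen_lt continuous_const Complex.continuous_im).mem_nhds hτ] with s hs
  exact automorphyFactor_cpow_eq_exp g a hs

lemma automorphyFactor_cpow_neg (a : ℂ) (k : ℕ) {τ : ℂ} (hτ : 0 < τ.im) :
    automorphyFactor g τ ^ (-a) =
      automorphyFactor g τ ^ (-(a + k)) * automorphyFactor g τ ^ k := by
  rw [← Complex.cpow_natCast, ← Complex.cpow_add _ _ (automorphyFactor_ne_zero g hτ), neg_add,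
    neg_add_cancel_right]

lemma automorphyFactor_cpow_neg_sub (α : ℂ) {k m : ℕ} (hk : k ≤ m) {τ : ℂ} (hτ : 0 < τ.im) :
    automorphyFactor g τ ^ (-(α + 2 * (m - k : ℕ))) =
      automorphyFactor g τ ^ (-(α + 2 * m)) * automorphyFactor g τ ^ (2 * k) := by
  rw [automorphyFactor_cpow_neg g _ (2 * k) hτ, Nat.cast_sub hk]
  push_cast
  ring_nf

lemma slashAct_eq_expShift (hΦ : ∀ μ : Fin n → ℕ, (∃ i, N ≤ μ i) → Φ μ = 0) (a : ℂ)
    (μ : Fin n → ℕ) (p : (Fin n → ℂ) × ℂ) :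
    uncurry (SlashAct n g a Φ μ) p = automorphyFactor g p.2 ^ (-a) *
      expShift N (-Complex.log (automorphyFactor g p.2))
        (fun ν => uncurry (Φ (μ + ν)) (jacobiAct g p)) := by
  rw [expShift_apply, ← tsum_mul_eq_sum_piFinset]
  · rfl
  · rintro ν ⟨i, hi⟩
    rw [hΦ (μ + ν) ⟨i, hi.trans (by simp)⟩]
    rfl

lemma IsHolomorphicFamily.slashAct (hΦ : IsHolomorphicFamily N Φ) (a : ℂ) :
    IsHolomorphicFamily N (SlashAct n g a Φ) where
  differentiableOn μ p hp := by
    have hlog : DifferentiableAt ℂ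
        (fun p : (Fin n → ℂ) × ℂ => -Complex.log (automorphyFactor g p.2)) p :=
      ((hasDerivAt_log_automorphyFactor g hp.1).differentiableAt.comp p differentiableAt_snd).neg
    have hcpow : DifferentiableAt ℂ
        (fun p : (Fin n → ℂ) × ℂ => automorphyFactor g p.2 ^ (-a)) p :=
      (hasDerivAt_automorphyFactor_cpow g (-a) hp.1).differentiableAt.comp p differentiableAt_snd
    have hA := (differentiableOn_jacobiAct g).differentiableAt ((isOpen_Uset n).mem_nhds hp)
    have hcoeff (ν : Fin n → ℕ) : DifferentiableAt ℂ
        (fun p : (Fin n → ℂ) × ℂ => expCoeff (-Complex.log (automorphyFactor g p.2)) ν) p :=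
      (hasDerivAt_expCoeff ν _).differentiableAt.comp p hlog
    have hsum := DifferentiableAt.fun_sum (u := Fintype.piFinset fun _ => Finset.range N)
      fun ν _ => (hcoeff ν).fun_mul
        ((hΦ.differentiableAt (μ + ν) (jacobiAct_mem_Uset g hp)).comp p hA)
    refine ((hcpow.fun_mul hsum).congr_of_eventuallyEq ?_).differentiableWithinAt
    refine Filter.Eventually.of_forall fun q => ?_
    simp only [slashAct_eq_expShift g hΦ.eq_zero, expShift_apply, Function.comp_apply]
  eq_zero μ := fun ⟨i, hi⟩ => by
    have hzero (ν : Fin n → ℕ) : Φ (μ + ν) = 0 := hΦ.eq_zero _ ⟨i, hi.trans (by simp)⟩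
    funext z τ
    simp [SlashAct, hzero]

/-- The terms without `fderiv` come from differentiating `(Cτ + D) ^ (-a)` and `log (Cτ + D)`. -/
lemma hasDerivAt_slashAct_comp (hΦ : IsHolomorphicFamily N Φ) (a : ℂ) (μ : Fin n → ℕ) {j : Fin n}
    {c : ℂ → (Fin n → ℂ) × ℂ} {t : ℂ} (ht : c t ∈ Uset n)
    (hc : HasDerivAt c (heatField j (c t)) t) :
    HasDerivAt (fun s => uncurry (SlashAct n g a Φ μ) (c s))
      (automorphyFactor g (c t).2 ^ (-a) *
        expShift N (-Complex.log (automorphyFactor g (c t).2)) (fun ν =>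
          (automorphyFactor g (c t).2 ^ 2)⁻¹ * fderiv ℂ (uncurry (Φ (μ + ν))) (jacobiAct g (c t))
            (heatField j (jacobiAct g (c t))) -
          2 * π * Complex.I * (g 1 0 : ℤ) / automorphyFactor g (c t).2 *
            (a * uncurry (Φ (μ + ν)) (jacobiAct g (c t)) +
              ∑ i, uncurry (Φ (μ + ν + Pi.single i 1)) (jacobiAct g (c t))))) t := by
  have hτ : HasDerivAt (fun s => (c s).2) (2 * π * Complex.I) t := hc.snd
  have hL := ((hasDerivAt_log_automorphyFactor g ht.1).comp t hτ).neg
  have hJ := (hasDerivAt_automorphyFactor_cpow g (-a) ht.1).comp t hτ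
  have hf (ν : Fin n → ℕ) := HasFDerivAt.comp_hasDerivAt t
    (hΦ.differentiableAt (μ + ν) (jacobiAct_mem_Uset g ht)).hasFDerivAt
    (hasDerivAt_jacobiAct_comp g ht hc)
  have hE := hasDerivAt_expShift (N := N) hL hf (fun ν ⟨i, hi⟩ => by
    rw [Function.comp_apply, hΦ.eq_zero (μ + ν) ⟨i, hi.trans (by simp)⟩]
    rfl)
  simp only [slashAct_eq_expShift g hΦ.eq_zero]
  refine (hJ.fun_mul hE).congr_deriv ?_
  set J := automorphyFactor g (c t).2
  set q := jacobiAct g (c t)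
  have hsplit : (fun ν => (J ^ 2)⁻¹ * fderiv ℂ (uncurry (Φ (μ + ν))) q (heatField j q) -
        2 * π * Complex.I * (g 1 0 : ℤ) / J * (a * uncurry (Φ (μ + ν)) q +
          ∑ i, uncurry (Φ (μ + ν + Pi.single i 1)) q)) =
      (fun ν => fderiv ℂ (uncurry (Φ (μ + ν))) q ((J ^ 2)⁻¹ • heatField j q)) -
        (2 * π * Complex.I * (g 1 0 : ℤ) / J) • (a • (fun ν => uncurry (Φ (μ + ν)) q) +
          fun ν => ∑ i, uncurry (Φ (μ + (ν + Pi.single i 1))) q) := by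
    funext ν
    simp [add_assoc, mul_add]
  rw [hsplit, map_sub, map_smul, map_add, map_smul]
  simp only [Function.comp_apply, Pi.neg_apply, smul_eq_mul]
  ring

lemma DOp_slashAct (hΦ : IsHolomorphicFamily N Φ) (a : ℂ) (j : Fin n) (μ : Fin n → ℕ) :
    Set.EqOn (uncurry (DOp n a j (SlashAct n g a Φ) μ))
      (uncurry (SlashAct n g (a + 2) (DOp n a j Φ) μ)) (Uset n) := by
  intro p hp
  obtain ⟨c, rfl, hc⟩ : ∃ c : ℂ → (Fin n → ℂ) × ℂ, c 0 = p ∧ HasDerivAt c (heatField j p) 0 :=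
    ⟨fun s => p + s • heatField j p, by simp,
      (((hasDerivAt_id 0).smul_const (heatField j p)).const_add p).congr_deriv (one_smul _ _)⟩
  have hslash := (hΦ.slashAct g a).differentiableAt μ hp
  have hfderiv := (hslash.hasFDerivAt.comp_hasDerivAt 0 hc).unique
    (hasDerivAt_slashAct_comp g hΦ a μ hp hc)
  have hDOp (ν : Fin n → ℕ) := DOp_eq_fderiv (a := a) (j := j)
    (hΦ.differentiableAt ν (jacobiAct_mem_Uset g hp))
  rw [DOp_eq_fderiv hslash, hfderiv, G2_eq_G2_moebius g hp.1]
  simp only [slashAct_eq_expShift g (hΦ.dOp a j).eq_zero, slashAct_eq_expShift g hΦ.eq_zero, hDOp]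
  set q := jacobiAct g (c 0)
  set J := automorphyFactor g (c 0).2
  have hJ : J ≠ 0 := automorphyFactor_ne_zero g hp.1
  have hpow : J ^ (-a) = J ^ (-(a + 2)) * J ^ 2 := automorphyFactor_cpow_neg g a 2 hp.1
  let D : (Fin n → ℕ) → ℂ := fun ν => fderiv ℂ (uncurry (Φ (μ + ν))) q (heatField j q)
  let f : (Fin n → ℕ) → ℂ := fun ν => uncurry (Φ (μ + ν)) q
  let S : (Fin n → ℕ) → ℂ := fun ν => ∑ i, uncurry (Φ (μ + ν + Pi.single i 1)) q
  set E := expShift (ι := Fin n) N (-Complex.log J)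
  have hS : ∑ i : Fin n, J ^ (-a) * E (fun ν => uncurry (Φ (μ + Pi.single i 1 + ν)) q) =
      J ^ (-a) * E S := by
    rw [← Finset.mul_sum, ← map_sum, Finset.sum_fn]
    simp only [add_right_comm μ, S]
  rw [hS]
  change J ^ (-a) * E ((J ^ 2)⁻¹ • D - (2 * π * Complex.I * (g 1 0 : ℤ) / J) • (a • f + S)) +
      (G2 q.2 / J ^ 2 + 2 * π * Complex.I * (g 1 0 : ℤ) / J) *
        (a * (J ^ (-a) * E f) + J ^ (-a) * E S) =
    J ^ (-(a + 2)) * E (D + G2 q.2 • (a • f + S))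
  simp only [map_sub, map_add, map_smul, smul_eq_mul, hpow]
  field_simp
  ring

lemma DIter_slashAct (hΦ : IsHolomorphicFamily N Φ) (α : ℂ) (j : Fin n) (k : ℕ)
    (μ : Fin n → ℕ) :
    Set.EqOn (uncurry (DIter n α j k (SlashAct n g α Φ) μ))
      (uncurry (SlashAct n g (α + 2 * k) (DIter n α j k Φ) μ)) (Uset n) := by
  induction k generalizing μ with
  | zero => simp [DIter, Set.EqOn]
  | succ k ih =>
    have hD := hΦ.dIter α j k
    rw [show α + 2 * ((k + 1 : ℕ) : ℂ) = α + 2 * k + 2 by push_cast; ring]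
    exact (DOp_congr ih (hD.slashAct g _).differentiableOn _ j μ).trans (DOp_slashAct g hD _ j μ)

end Slash

/-- Modular invariance of the space of solutions: if the coefficients `b_p` transform
with weight `2p` under `g ∈ SL₂(ℤ)` and `Φ ∈ χ` satisfies
`(𝒟_j(α+2(m−1)) ∘ ⋯ ∘ 𝒟_j(α))Φ + Σ_{p=1}^m b_p·(𝒟_j(α+2(m−p−1)) ∘ ⋯ ∘ 𝒟_j(α))Φ = 0`
on `U`, then `Φ|_{g,α}` satisfies the same differential equation on `U`. -/
theorem slash_invariance_of_solutions (n : ℕ) (hn : 1 ≤ n)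
    (g : Matrix.SpecialLinearGroup (Fin 2) ℤ) (j : Fin n) (m : ℕ) (hm : 1 ≤ m)
    (α : ℂ) (b : Fin m → (Fin n → ℂ) → ℂ → ℂ)
    (hb : ∀ (p : Fin m) (z : Fin n → ℂ) (τ : ℂ), (z, τ) ∈ Uset n →
      b p (fun i => z i / ((g 1 0 : ℤ) * τ + (g 1 1 : ℤ)))
          (((g 0 0 : ℤ) * τ + (g 0 1 : ℤ)) / ((g 1 0 : ℤ) * τ + (g 1 1 : ℤ))) =
        ((g 1 0 : ℤ) * τ + (g 1 1 : ℤ)) ^ (2 * ((p : ℕ) + 1)) * b p z τ)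
    (Φ : (Fin n → ℕ) → (Fin n → ℂ) → ℂ → ℂ)
    (hΦhol : ∀ μ, DifferentiableOn ℂ (fun p : (Fin n → ℂ) × ℂ => Φ μ p.1 p.2) (Uset n))
    (hΦfin : ∃ N : ℕ, ∀ μ : Fin n → ℕ, (∃ i, N ≤ μ i) → Φ μ = 0)
    (hΦeq : ∀ (z : Fin n → ℂ) (τ : ℂ), (z, τ) ∈ Uset n → ∀ μ : Fin n → ℕ,
      DIter n α j m Φ μ z τ +
        ∑ p : Fin m, b p z τ * DIter n α j (m - ((p : ℕ) + 1)) Φ μ z τ = 0) :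
    ∀ (z : Fin n → ℂ) (τ : ℂ), (z, τ) ∈ Uset n → ∀ μ : Fin n → ℕ,
      DIter n α j m (SlashAct n g α Φ) μ z τ +
        ∑ p : Fin m, b p z τ * DIter n α j (m - ((p : ℕ) + 1)) (SlashAct n g α Φ) μ z τ = 0 := by
  intro z τ h μ
  obtain ⟨N, hN⟩ := hΦfin
  have hΦ : IsHolomorphicFamily N Φ := ⟨hΦhol, hN⟩
  let J := automorphyFactor g τ
  let q := jacobiAct g (z, τ)
  let f (k : ℕ) (ν : Fin n → ℕ) : ℂ := DIter n α j k Φ (μ + ν) q.1 q.2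
  have hslash (k : ℕ) : DIter n α j k (SlashAct n g α Φ) μ z τ =
      J ^ (-(α + 2 * k)) * expShift N (-Complex.log J) (f k) :=
    (DIter_slashAct g hΦ α j k μ h).trans (slashAct_eq_expShift g (hΦ.dIter α j k).eq_zero _ μ _)
  have hweight (p : Fin m) : J ^ (-(α + 2 * (m - ((p : ℕ) + 1) : ℕ))) =
      J ^ (-(α + 2 * m)) * J ^ (2 * ((p : ℕ) + 1)) :=
    automorphyFactor_cpow_neg_sub g α p.isLt h.1
  have hbq (p : Fin m) : b p q.1 q.2 = J ^ (2 * ((p : ℕ) + 1)) * b p z τ := hb p z τ h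
  have hzero : f m + ∑ p, b p q.1 q.2 • f (m - ((p : ℕ) + 1)) = 0 := by
    funext ν
    simpa using hΦeq q.1 q.2 (jacobiAct_mem_Uset g h) (μ + ν)
  calc _ = J ^ (-(α + 2 * m)) * expShift N (-Complex.log J)
        (f m + ∑ p, b p q.1 q.2 • f (m - ((p : ℕ) + 1))) := by
        simp only [hslash, hweight, hbq, map_add, map_sum, map_smul, smul_eq_mul, mul_add,
          Finset.mul_sum]
        exact congrArg _ (Finset.sum_congr rfl fun p _ => by ring)
    _ = 0 := by rw [hzero, map_zero, mul_zero]
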